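/- Let F > 0. Define the standard normal pdf φ(x) = exp(−x²/2)/√(2π) and cdf N(x) = ∫_{−∞}^x φ(u) du. For k ∈ ℝ and w > 0 set d₊(k,w) = −k/√w + √w/2, d₋(k,w) = −k/√w − √w/2, and C_BS(k,w) = F·(N(d₊(k,w)) − exp(k)·N(d₋(k,w))). Let w : ℝ → ℝ be twice differentiable with w(k) > 0 for all k, and define g(k) := (1 − k·w′(k)/(2·w(k)))² − (w′(k)²/4)·(1/w(k) + 1/4) + w″(k)/2 and the strike-parametrized call Ĉ(K) := C_BS(log(K/F), w(log(K/F))) for K > 0. Then Ĉ is twice differentiable on (0,∞) and for every K > 0, with k := log(K/F), Ĉ″(K) = (F·φ(d₊(k,w(k))) / (K²·√(w(k))))·g(k). -/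

import Mathlib

open MeasureTheory

/-- Standard normal pdf. -/
noncomputable def gauss (x : ℝ) : ℝ := Real.exp (-x ^ 2 / 2) / Real.sqrt (2 * Real.pi)

/-- Standard normal cdf. -/
noncomputable def normCdf (x : ℝ) : ℝ := ∫ u in Set.Iic x, gauss u

/-- Black–Scholes `d₊` in log-moneyness `k` and total variance `w`. -/
noncomputable def dplus (k w : ℝ) : ℝ := -k / Real.sqrt w + Real.sqrt w / 2

/-- Black–Scholes `d₋` in log-moneyness `k` and total variance `w`. -/
noncomputable def dminus (k w : ℝ) : ℝ := -k / Real.sqrt w - Real.sqrt w / 2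

/-- Undiscounted forward Black–Scholes call price. -/
noncomputable def CBS (F k w : ℝ) : ℝ :=
  F * (normCdf (dplus k w) - Real.exp k * normCdf (dminus k w))

/-!
Write `c(k) = C_BS(k, w(k))`, so that `Ĉ(K) = c(log (K / F))` and `K² Ĉ″(K) = c″(k) - c′(k)`.
Since `eᵏ φ(d₋) = φ(d₊)`, the first derivative splits into a vega term and a delta term,
`c′ = F (φ(d₊) w′ / (2√w) - eᵏ N(d₋))`, and in `c″ - c′` the terms in `N(d₋)` cancel. With
`a = 1 - k w′ / (2w)`, what remains is `F φ(d₊) / √w` times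
`(a - w′/4) (a + w′/4) - w′² / (4w) + w″ / 2`, which is `g`.
-/

open Filter Set
open scoped Topology

section Calculus

lemma hasDerivAt_integral_Iic {E : Type*} [NormedAddCommGroup E] [NormedSpace ℝ E]
    [CompleteSpace E] {f : ℝ → E} {x : ℝ} (hf : Integrable f) (hx : ContinuousAt f x) :
    HasDerivAt (fun y => ∫ u in Iic y, f u) (f x) x := by
  have split : (fun y => ∫ u in Iic y, f u) =
      fun y => (∫ u in Iic x, f u) + ∫ u in x..y, f u := by
    funext y
    rw [← intervalIntegral.integral_Iic_sub_Iic hf.integrableOn hf.integrableOn,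
      add_sub_cancel]
  rw [split]
  exact (intervalIntegral.integral_hasDerivAt_right hf.intervalIntegrable
    hf.aestronglyMeasurable.stronglyMeasurableAtFilter hx).const_add _

variable {f : ℝ → ℝ} {f' f'' F x : ℝ}

lemma hasDerivAt_comp_log_div (hF : F ≠ 0) (hx : x ≠ 0)
    (hf : HasDerivAt f f' (Real.log (x / F))) :
    HasDerivAt (fun K => f (Real.log (K / F))) (f' / x) x := by
  have hlog : HasDerivAt (fun K => Real.log (K / F)) x⁻¹ x := by
    refine (((hasDerivAt_id x).div_const F).log (div_ne_zero hx hF)).congr_deriv ?_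
    simp only [id]
    field_simp
  exact hf.comp x hlog

lemma hasDerivAt_deriv_comp_log_div (hF : F ≠ 0) (hx : x ≠ 0)
    (hf : ∀ᶠ k in 𝓝 (Real.log (x / F)), DifferentiableAt ℝ f k)
    (hf' : HasDerivAt (deriv f) f'' (Real.log (x / F))) :
    HasDerivAt (deriv fun K => f (Real.log (K / F)))
      ((f'' - deriv f (Real.log (x / F))) / x ^ 2) x := by
  have hlog : ContinuousAt (fun K => Real.log (K / F)) x :=
    (continuousAt_id.div_const F).log (div_ne_zero hx hF)
  have deriv_eq : (deriv fun K => f (Real.log (K / F))) =ᶠ[𝓝 x]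
      fun K => deriv f (Real.log (K / F)) / K := by
    filter_upwards [hlog.eventually hf, eventually_ne_nhds hx] with K hK hK0
    exact (hasDerivAt_comp_log_div hF hK0 hK.hasDerivAt).deriv
  refine HasDerivAt.congr_of_eventuallyEq ?_ deriv_eq
  refine ((hasDerivAt_comp_log_div hF hx hf').div (hasDerivAt_id x) hx).congr_deriv ?_
  simp only [id]
  field_simp

end Calculus

section Gaussian

lemma gauss_eq_gaussianPDFReal : gauss = ProbabilityTheory.gaussianPDFReal 0 1 := by
  funext x
  simp [gauss, ProbabilityTheory.gaussianPDFReal, div_eq_inv_mul]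

lemma hasDerivAt_gauss (x : ℝ) : HasDerivAt gauss (-x * gauss x) x := by
  have hexponent : HasDerivAt (fun x : ℝ => -x ^ 2 / 2) (-x) x := by
    refine ((hasDerivAt_pow 2 x).neg.div_const 2).congr_deriv ?_
    norm_num
    ring
  refine (hexponent.exp.div_const (√(2 * Real.pi))).congr_deriv ?_
  rw [gauss]
  ring

lemma hasDerivAt_normCdf (x : ℝ) : HasDerivAt normCdf (gauss x) x := by
  have hint : Integrable gauss :=
    gauss_eq_gaussianPDFReal ▸ ProbabilityTheory.integrable_gaussianPDFReal 0 1
  exact hasDerivAt_integral_Iic hint (hasDerivAt_gauss x).continuousAt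

lemma exp_mul_gauss_dminus (k : ℝ) {w : ℝ} (hw : 0 < w) :
    Real.exp k * gauss (dminus k w) = gauss (dplus k w) := by
  have exponents : k + -dminus k w ^ 2 / 2 = -dplus k w ^ 2 / 2 := by
    have hs : √w ≠ 0 := (Real.sqrt_pos.2 hw).ne'
    simp only [dminus, dplus]
    field_simp
    ring
  rw [gauss, gauss, ← mul_div_assoc, ← Real.exp_add, exponents]

end Gaussian

section Smile

/-- Durrleman's function `g` of a total-variance smile `w`, whose sign decides the convexity of
the call price in the strike. It is meaningful where `w` is positive and twice differentiable. -/
noncomputable def durrleman (w : ℝ → ℝ) (k : ℝ) : ℝ :=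
  (1 - k * deriv w k / (2 * w k)) ^ 2 - (deriv w k) ^ 2 / 4 * (1 / w k + 1 / 4)
    + deriv (deriv w) k / 2

lemma durrleman_eq_sub_mul_add (w : ℝ → ℝ) (k : ℝ) :
    durrleman w k =
      (1 - k * deriv w k / (2 * w k) - deriv w k / 4)
          * (1 - k * deriv w k / (2 * w k) + deriv w k / 4)
        - (deriv w k) ^ 2 / (4 * w k) + deriv (deriv w) k / 2 := by
  rw [durrleman]
  ring

variable {w : ℝ → ℝ} {k : ℝ}

lemma hasDerivAt_dplus_smile (hw : DifferentiableAt ℝ w k) (hpos : 0 < w k) :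
    HasDerivAt (fun x => dplus x (w x))
      (-(1 - k * deriv w k / (2 * w k) - deriv w k / 4) / √(w k)) k := by
  have hs : √(w k) ≠ 0 := (Real.sqrt_pos.2 hpos).ne'
  have hsqrt := hw.hasDerivAt.sqrt hpos.ne'
  refine (((hasDerivAt_id k).neg.div hsqrt hs).add (hsqrt.div_const 2)).congr_deriv ?_
  simp only [id, Pi.neg_apply, Real.sq_sqrt hpos.le]
  field_simp
  rw [Real.sq_sqrt hpos.le]
  ring

lemma hasDerivAt_dminus_smile (hw : DifferentiableAt ℝ w k) (hpos : 0 < w k) :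
    HasDerivAt (fun x => dminus x (w x))
      (-(1 - k * deriv w k / (2 * w k) + deriv w k / 4) / √(w k)) k := by
  have dminus_eq : (fun x => dminus x (w x)) = fun x => dplus x (w x) - √(w x) := by
    funext x
    simp only [dminus, dplus]
    ring
  rw [dminus_eq]
  refine ((hasDerivAt_dplus_smile hw hpos).sub (hw.hasDerivAt.sqrt hpos.ne')).congr_deriv ?_
  ring

lemma hasDerivAt_exp_mul_normCdf_dminus_smile (hw : DifferentiableAt ℝ w k) (hpos : 0 < w k) :
    HasDerivAt (fun x => Real.exp x * normCdf (dminus x (w x)))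
      (Real.exp k * normCdf (dminus k (w k))
        - gauss (dplus k (w k)) / √(w k)
          * (1 - k * deriv w k / (2 * w k) + deriv w k / 4)) k := by
  have hN := (hasDerivAt_normCdf _).comp k (hasDerivAt_dminus_smile hw hpos)
  refine ((Real.hasDerivAt_exp k).mul hN).congr_deriv ?_
  rw [← exp_mul_gauss_dminus k hpos]
  dsimp only [Function.comp_apply]
  ring

lemma hasDerivAt_CBS_smile (F : ℝ) (hw : DifferentiableAt ℝ w k) (hpos : 0 < w k) :
    HasDerivAt (fun x => CBS F x (w x))
      (F * (gauss (dplus k (w k)) * (deriv w k / (2 * √(w k)))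
        - Real.exp k * normCdf (dminus k (w k)))) k := by
  have hN := (hasDerivAt_normCdf _).comp k (hasDerivAt_dplus_smile hw hpos)
  refine ((hN.sub (hasDerivAt_exp_mul_normCdf_dminus_smile hw hpos)).const_mul F).congr_deriv ?_
  ring

lemma hasDerivAt_gauss_dplus_mul_deriv_sqrt_smile (hw : DifferentiableAt ℝ w k)
    (hw' : DifferentiableAt ℝ (deriv w) k) (hpos : 0 < w k) :
    HasDerivAt (fun x => gauss (dplus x (w x)) * (deriv w x / (2 * √(w x))))
      (gauss (dplus k (w k)) / √(w k)
        * (durrleman w k - (1 - k * deriv w k / (2 * w k) - deriv w k / 4))) k := by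
  have hs : √(w k) ≠ 0 := (Real.sqrt_pos.2 hpos).ne'
  have hφ := (hasDerivAt_gauss _).comp k (hasDerivAt_dplus_smile hw hpos)
  have hσ' : HasDerivAt (fun x => deriv w x / (2 * √(w x)))
      ((deriv (deriv w) k / 2 - (deriv w k) ^ 2 / (4 * w k)) / √(w k)) k := by
    refine (hw'.hasDerivAt.div ((hw.hasDerivAt.sqrt hpos.ne').const_mul 2)
      (mul_ne_zero two_ne_zero hs)).congr_deriv ?_
    rw [mul_pow, Real.sq_sqrt hpos.le]
    field_simp
    rw [Real.sq_sqrt hpos.le]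
    ring
  have dplus_mul : dplus k (w k) * (deriv w k / (2 * √(w k))) =
      deriv w k / 4 - k * deriv w k / (2 * w k) := by
    rw [dplus]
    field_simp
    rw [Real.sq_sqrt hpos.le]
    field_simp
    ring
  refine (hφ.mul hσ').congr_deriv ?_
  rw [durrleman_eq_sub_mul_add, Function.comp_apply]
  linear_combination gauss (dplus k (w k)) / √(w k)
    * (1 - k * deriv w k / (2 * w k) - deriv w k / 4) * dplus_mul

lemma hasDerivAt_deriv_CBS_smile (F : ℝ) (hw : ∀ᶠ x in 𝓝 k, DifferentiableAt ℝ w x)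
    (hw' : DifferentiableAt ℝ (deriv w) k) (hpos : 0 < w k) :
    HasDerivAt (deriv fun x => CBS F x (w x))
      (deriv (fun x => CBS F x (w x)) k
        + F * gauss (dplus k (w k)) / √(w k) * durrleman w k) k := by
  have hwk := hw.self_of_nhds
  have deriv_eq : (deriv fun x => CBS F x (w x)) =ᶠ[𝓝 k] fun x =>
      F * (gauss (dplus x (w x)) * (deriv w x / (2 * √(w x)))
        - Real.exp x * normCdf (dminus x (w x))) := by
    filter_upwards [hw, hwk.continuousAt.eventually_const_lt hpos] with x hx hx0
    exact (hasDerivAt_CBS_smile F hx hx0).deriv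
  rw [deriv_eq.self_of_nhds]
  refine HasDerivAt.congr_of_eventuallyEq ?_ deriv_eq
  have vega := hasDerivAt_gauss_dplus_mul_deriv_sqrt_smile hwk hw' hpos
  have delta := hasDerivAt_exp_mul_normCdf_dminus_smile hwk hpos
  refine ((vega.sub delta).const_mul F).congr_deriv ?_
  ring

end Smile

theorem durrleman_strike_convexity_factorization_general {F K : ℝ} (hF : 0 < F) (hK : 0 < K)
    {w : ℝ → ℝ} (hw1 : ∀ᶠ k in 𝓝 (Real.log (K / F)), DifferentiableAt ℝ w k)
    (hw2 : DifferentiableAt ℝ (deriv w) (Real.log (K / F))) (hwpos : 0 < w (Real.log (K / F))) :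
    DifferentiableAt ℝ (fun K : ℝ => CBS F (Real.log (K / F)) (w (Real.log (K / F)))) K ∧
    HasDerivAt (deriv fun K : ℝ => CBS F (Real.log (K / F)) (w (Real.log (K / F))))
      (F * gauss (dplus (Real.log (K / F)) (w (Real.log (K / F))))
          / (K ^ 2 * √(w (Real.log (K / F)))) * durrleman w (Real.log (K / F))) K := by
  have hc : ∀ᶠ k in 𝓝 (Real.log (K / F)), DifferentiableAt ℝ (fun x => CBS F x (w x)) k := by
    filter_upwards [hw1, hw1.self_of_nhds.continuousAt.eventually_const_lt hwpos] with k hk hk0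
    exact (hasDerivAt_CBS_smile F hk hk0).differentiableAt
  have hC := hasDerivAt_comp_log_div hF.ne' hK.ne' hc.self_of_nhds.hasDerivAt
  refine ⟨hC.differentiableAt, ?_⟩
  have hC' := hasDerivAt_deriv_comp_log_div hF.ne' hK.ne' hc
    (hasDerivAt_deriv_CBS_smile F hw1 hw2 hwpos)
  refine hC'.congr_deriv ?_
  rw [add_sub_cancel_left]
  field_simp

/-- Durrleman/Gatheral–Jacquier factorization of strike-convexity:
`Ĉ″(K) = (F·φ(d₊(k,w(k)))/(K²·√(w(k))))·g(k)` with `k = log(K/F)`. -/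
theorem durrleman_strike_convexity_factorization (F : ℝ) (hF : 0 < F)
    (w : ℝ → ℝ) (hw1 : Differentiable ℝ w) (hw2 : Differentiable ℝ (deriv w))
    (hwpos : ∀ k, 0 < w k) :
    (∀ K : ℝ, 0 < K →
      DifferentiableAt ℝ (fun K : ℝ => CBS F (Real.log (K / F)) (w (Real.log (K / F)))) K) ∧
    (∀ K : ℝ, 0 < K →
      DifferentiableAt ℝ
        (deriv (fun K : ℝ => CBS F (Real.log (K / F)) (w (Real.log (K / F))))) K) ∧
    ∀ K : ℝ, 0 < K →
      deriv (deriv (fun K : ℝ => CBS F (Real.log (K / F)) (w (Real.log (K / F))))) K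
        = F * gauss (dplus (Real.log (K / F)) (w (Real.log (K / F))))
            / (K ^ 2 * Real.sqrt (w (Real.log (K / F)))) *
          ((1 - Real.log (K / F) * deriv w (Real.log (K / F)) / (2 * w (Real.log (K / F)))) ^ 2
            - (deriv w (Real.log (K / F))) ^ 2 / 4 * (1 / w (Real.log (K / F)) + 1 / 4)
            + deriv (deriv w) (Real.log (K / F)) / 2) := by
  have h K hK := durrleman_strike_convexity_factorization_general (K := K) hF hK
    (.of_forall hw1) (hw2 _) (hwpos _)
  exact ⟨fun K hK => (h K hK).1, fun K hK => (h K hK).2.differentiableAt,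
    fun K hK => (h K hK).2.deriv⟩
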